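/- arXiv:1812.04762 — 2 statements merged into one kernel-verified Lean document; each statement's English description precedes it below -/
import Mathlib

section
/- In the Golub–Kahan bidiagonalization setup, the quantities γ_k^{cgme} are strictly decreasing: for every k with 1 ≤ k ≤ n−1 one has γ_{k+1}^{cgme} < γ_k^{cgme}. -/
open Matrix

/-- Spectral norm (largest singular value) of a real matrix. -/
noncomputable def specNorm {a b : ℕ} (M : Matrix (Fin a) (Fin b) ℝ) : ℝ :=
  ‖LinearMap.toContinuousLinearMap (Matrix.toEuclideanLin M)‖

/-- The `j`-th largest singular value of a real matrix (`j ≥ 1`), characterized via the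
Eckart–Young theorem as the minimal spectral-norm distance to matrices of rank `< j`;
it is `0` when `j` exceeds the smaller dimension. -/
noncomputable def singVal {a b : ℕ} (M : Matrix (Fin a) (Fin b) ℝ) (j : ℕ) : ℝ :=
  sInf {r : ℝ | ∃ D : Matrix (Fin a) (Fin b) ℝ, D.rank < j ∧ r = specNorm (M - D)}

/-- The matrix of the first `k` columns of `M`. -/
def colSub {a b : ℕ} (M : Matrix (Fin a) (Fin b) ℝ) (k : ℕ) (hk : k ≤ b) :
    Matrix (Fin a) (Fin k) ℝ :=
  M.submatrix id fun j => ⟨j.1, lt_of_lt_of_le j.2 hk⟩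

/-- The leading `r × c` submatrix of `M`. -/
def subUL {a b : ℕ} (M : Matrix (Fin a) (Fin b) ℝ) (r c : ℕ) (hr : r ≤ a) (hc : c ≤ b) :
    Matrix (Fin r) (Fin c) ℝ :=
  M.submatrix (fun i => ⟨i.1, lt_of_lt_of_le i.2 hr⟩) (fun j => ⟨j.1, lt_of_lt_of_le j.2 hc⟩)

/-!
`P_k P_kᵀ` projects onto the span of the first `k` columns of `P`. So if `A = P C` and `P` has
orthonormal columns, then `γ_k^{cgme}` is the norm of what is left of `C` after deleting its first
`k` rows. It remains to see that deleting the first row of a matrix `M` whose Gram matrix `M Mᴴ` is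
lower Hessenberg with nonzero superdiagonal strictly decreases the norm. If it did not, a vector
`u` at which the adjoint of the shorter matrix attains its norm would, with a zero put in front, be
one at which `Mᴴ` attains its norm, hence an eigenvector of `M Mᴴ`. But row `i` of the eigenvalue
equation expresses the entry `i + 1` of an eigenvector in terms of the earlier ones, so an
eigenvector whose first entry is `0` vanishes. For `C = B Qᵀ` the Gram matrix is the tridiagonal
`B Bᵀ`, with superdiagonal entries `α_i β_{i+1}`.
-/

section NormAttaining

variable {𝕜 E F : Type*} [RCLike 𝕜]

lemma exists_norm_apply_eq_opNorm [NormedAddCommGroup E] [NormedSpace 𝕜 E] [FiniteDimensional 𝕜 E]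
    [Nontrivial E] [SeminormedAddCommGroup F] [NormedSpace 𝕜 F] (T : E →L[𝕜] F) :
    ∃ x : E, ‖x‖ = 1 ∧ ‖T x‖ = ‖T‖ := by
  have := FiniteDimensional.proper_rclike 𝕜 E
  let := NormedSpace.restrictScalars ℝ 𝕜 E
  obtain ⟨x, hx, hmax⟩ := (isCompact_sphere (0 : E) 1).exists_isMaxOn
    (NormedSpace.sphere_nonempty.2 zero_le_one) (f := fun x => ‖T x‖) (by fun_prop)
  have hx : ‖x‖ = 1 := mem_sphere_zero_iff_norm.1 hx
  refine ⟨x, hx, le_antisymm (by simpa [hx] using T.le_opNorm x) ?_⟩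
  exact T.opNorm_le_of_unit_norm (norm_nonneg _) fun y hy => hmax (mem_sphere_zero_iff_norm.2 hy)

lemma adjoint_apply_apply_of_norm_apply_eq [NormedAddCommGroup E] [InnerProductSpace 𝕜 E]
    [CompleteSpace E] [NormedAddCommGroup F] [InnerProductSpace 𝕜 F] [CompleteSpace F]
    (T : E →L[𝕜] F) {x : E} (hx : ‖T x‖ = ‖T‖ * ‖x‖) :
    ContinuousLinearMap.adjoint T (T x) = ((‖T‖ ^ 2 : ℝ) : 𝕜) • x := by
  have hle : ‖ContinuousLinearMap.adjoint T (T x)‖ ≤ ‖T‖ * ‖T x‖ := by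
    simpa using (ContinuousLinearMap.adjoint T).le_opNorm (T x)
  have hinner : RCLike.re (inner 𝕜 (ContinuousLinearMap.adjoint T (T x))
      (((‖T‖ ^ 2 : ℝ) : 𝕜) • x)) = ‖T‖ ^ 2 * ‖T x‖ ^ 2 := by
    rw [inner_smul_right, ContinuousLinearMap.adjoint_inner_left, inner_self_eq_norm_sq_to_K,
      ← RCLike.ofReal_pow, ← RCLike.ofReal_mul, RCLike.ofReal_re]
  have hsq : ‖ContinuousLinearMap.adjoint T (T x) - ((‖T‖ ^ 2 : ℝ) : 𝕜) • x‖ ^ 2 ≤ 0 := by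
    calc
      _ = ‖ContinuousLinearMap.adjoint T (T x)‖ ^ 2 - 2 * (‖T‖ ^ 2 * ‖T x‖ ^ 2)
          + (‖T‖ ^ 2 * ‖x‖) ^ 2 := by
        rw [@norm_sub_sq 𝕜, hinner, norm_smul, RCLike.norm_ofReal, abs_of_nonneg (sq_nonneg _)]
      _ ≤ (‖T‖ * ‖T x‖) ^ 2 - 2 * (‖T‖ ^ 2 * ‖T x‖ ^ 2) + (‖T‖ ^ 2 * ‖x‖) ^ 2 := by gcongr
      _ = 0 := by rw [hx]; ring
  exact sub_eq_zero.1 (norm_eq_zero.1 (pow_eq_zero_iff two_ne_zero |>.1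
    (le_antisymm hsq (sq_nonneg _))))

end NormAttaining

section Hessenberg

/-- Unreduced lower Hessenberg matrices: all entries above the superdiagonal vanish, and no entry
of the superdiagonal does. An unreduced symmetric tridiagonal (Jacobi) matrix is of this form. -/
structure IsUnreducedHessenberg {R : Type*} [Zero R] {n : ℕ} (T : Matrix (Fin n) (Fin n) R) :
    Prop where
  superdiag_ne_zero : ∀ {i j : Fin n}, (i : ℕ) + 1 = j → T i j ≠ 0
  above_superdiag_eq_zero : ∀ {i j : Fin n}, (i : ℕ) + 1 < j → T i j = 0

variable {R : Type*}

lemma IsUnreducedHessenberg.submatrix_of_val_eq_add [Zero R] {l n k : ℕ}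
    {T : Matrix (Fin n) (Fin n) R} (hT : IsUnreducedHessenberg T) {e : Fin l → Fin n}
    (he : ∀ i, (e i : ℕ) = k + i) : IsUnreducedHessenberg (T.submatrix e e) where
  superdiag_ne_zero {i j} hij := hT.superdiag_ne_zero (by rw [he, he]; omega)
  above_superdiag_eq_zero {i j} hij := hT.above_superdiag_eq_zero (by rw [he, he]; omega)

lemma IsUnreducedHessenberg.eq_zero_of_mulVec_eq_smul [Ring R] [NoZeroDivisors R] {n : ℕ}
    {T : Matrix (Fin (n + 1)) (Fin (n + 1)) R} (hT : IsUnreducedHessenberg T)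
    {u : Fin (n + 1) → R} {c : R} (hu : T *ᵥ u = c • u) (hu0 : u 0 = 0) : u = 0 := by
  ext i
  induction i using WellFoundedLT.induction with
  | ind i ih =>
    obtain rfl | ⟨j, rfl⟩ := i.eq_zero_or_eq_succ
    · exact hu0
    have hrow : (T *ᵥ u) j.castSucc = T j.castSucc j.succ * u j.succ := by
      rw [mulVec, dotProduct]
      refine Fintype.sum_eq_single j.succ fun x hx => ?_
      obtain hlt | hgt := lt_or_gt_of_ne hx
      · rw [ih x hlt, Pi.zero_apply, mul_zero]
      · rw [hT.above_superdiag_eq_zero (i := j.castSucc) hgt, zero_mul]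
    have hzero : T j.castSucc j.succ * u j.succ = 0 := by
      rw [← hrow, hu, Pi.smul_apply, ih _ j.castSucc_lt_succ, Pi.zero_apply, smul_zero]
    exact (mul_eq_zero.1 hzero).resolve_left (hT.superdiag_ne_zero (by simp))

lemma isUnreducedHessenberg_mul_transpose_of_bidiagonal [Semiring R] [NoZeroDivisors R] {n : ℕ}
    {B : Matrix (Fin (n + 1)) (Fin n) R} {α β : Fin n → R} (hα : ∀ i, α i ≠ 0) (hβ : ∀ i, β i ≠ 0)
    (hB : ∀ (i : Fin (n + 1)) (j : Fin n),
      B i j = if (i : ℕ) = j then α j else if (i : ℕ) = j + 1 then β j else 0) :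
    IsUnreducedHessenberg (B * Bᵀ) where
  superdiag_ne_zero {i j} hij := by
    have hi : (i : ℕ) < n := by omega
    have hentry : (B * Bᵀ) i j = α ⟨i, hi⟩ * β ⟨i, hi⟩ := by
      rw [mul_apply, Fintype.sum_eq_single ⟨i, hi⟩]
      · simp [hB, ← hij]
      · intro c hc
        have hc : (c : ℕ) ≠ i := fun h => hc (Fin.ext h)
        rw [transpose_apply, hB i, hB j]
        split_ifs <;> first | omega | simp only [mul_zero, zero_mul]
    exact hentry ▸ mul_ne_zero (hα _) (hβ _)
  above_superdiag_eq_zero {i j} hij := by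
    rw [mul_apply]
    refine Finset.sum_eq_zero fun c _ => ?_
    rw [transpose_apply, hB i, hB j]
    split_ifs <;> first | omega | simp only [mul_zero, zero_mul]

lemma mul_transpose_mul_transpose_of_transpose_mul_self_eq_one [CommSemiring R] {ι κ μ : Type*}
    [Fintype ι] [Fintype κ] [DecidableEq κ] {Q : Matrix ι κ R} (hQ : Qᵀ * Q = 1)
    (B : Matrix μ κ R) : (B * Qᵀ) * (B * Qᵀ)ᵀ = B * Bᵀ := by
  rw [transpose_mul, transpose_transpose, Matrix.mul_assoc, ← Matrix.mul_assoc Qᵀ, hQ,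
    Matrix.one_mul]

end Hessenberg

section SpectralNorm

open scoped Matrix.Norms.L2Operator

variable {𝕜 ι κ μ : Type*} [RCLike 𝕜] [Fintype ι] [Fintype κ] [Fintype μ]

lemma specNorm_eq_l2_opNorm {a b : ℕ} (M : Matrix (Fin a) (Fin b) ℝ) : specNorm M = ‖M‖ := rfl

lemma l2_opNorm_mul_of_conjTranspose_mul_self_eq_one [DecidableEq κ] [DecidableEq μ]
    {P : Matrix ι κ 𝕜} (hP : Pᴴ * P = 1) (M : Matrix κ μ 𝕜) : ‖P * M‖ = ‖M‖ := by
  rw [← mul_self_inj (norm_nonneg _) (norm_nonneg _), ← l2_opNorm_conjTranspose_mul_self,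
    ← l2_opNorm_conjTranspose_mul_self, conjTranspose_mul, Matrix.mul_assoc,
    ← Matrix.mul_assoc Pᴴ, hP, Matrix.one_mul]

lemma exists_norm_conjTranspose_mulVec_eq_l2_opNorm [Nonempty κ] [DecidableEq ι]
    (M : Matrix κ ι 𝕜) :
    ∃ u : κ → 𝕜, ‖WithLp.toLp 2 u‖ = 1 ∧ ‖WithLp.toLp 2 (Mᴴ *ᵥ u)‖ = ‖M‖ := by
  classical
  obtain ⟨x, hx, hMx⟩ := exists_norm_apply_eq_opNorm (toEuclideanLin Mᴴ).toContinuousLinearMap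
  exact ⟨x.ofLp, hx, hMx.trans (l2_opNorm_conjTranspose M)⟩

lemma mul_conjTranspose_mulVec_of_norm_eq [DecidableEq ι] (M : Matrix κ ι 𝕜) {u : κ → 𝕜}
    (hu : ‖WithLp.toLp 2 (Mᴴ *ᵥ u)‖ = ‖M‖ * ‖WithLp.toLp 2 u‖) :
    (M * Mᴴ) *ᵥ u = ((‖M‖ ^ 2 : ℝ) : 𝕜) • u := by
  classical
  have hadj := adjoint_apply_apply_of_norm_apply_eq (toEuclideanLin Mᴴ).toContinuousLinearMap
    (x := WithLp.toLp 2 u) (hu.trans (by rw [← l2_opNorm_conjTranspose]; rfl))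
  rw [← LinearMap.adjoint_toContinuousLinearMap, ← toEuclideanLin_conjTranspose_eq_adjoint,
    conjTranspose_conjTranspose] at hadj
  rw [← mulVec_mulVec, ← l2_opNorm_conjTranspose]
  exact congrArg WithLp.ofLp hadj

theorem IsUnreducedHessenberg.norm_submatrix_succ_lt [DecidableEq ι] {l : ℕ}
    {M : Matrix (Fin (l + 2)) ι 𝕜} (hM : IsUnreducedHessenberg (M * Mᴴ)) :
    ‖M.submatrix Fin.succ id‖ < ‖M‖ := by
  obtain ⟨u, hu, hMu⟩ := exists_norm_conjTranspose_mulVec_eq_l2_opNorm (M.submatrix Fin.succ id)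
  have hcons_apply : Mᴴ *ᵥ vecCons 0 u = (M.submatrix Fin.succ id)ᴴ *ᵥ u := by
    ext i
    simp [mulVec, dotProduct, Fin.sum_univ_succ]
  have hcons_norm : ‖WithLp.toLp 2 (vecCons 0 u)‖ = 1 := by
    rw [← hu, EuclideanSpace.norm_eq, EuclideanSpace.norm_eq]
    simp [Fin.sum_univ_succ]
  have hle : ‖M.submatrix Fin.succ id‖ ≤ ‖M‖ := calc
    _ = ‖WithLp.toLp 2 (Mᴴ *ᵥ vecCons 0 u)‖ := by rw [hcons_apply, hMu]
    _ ≤ ‖Mᴴ‖ * ‖WithLp.toLp 2 (vecCons 0 u)‖ := l2_opNorm_mulVec Mᴴ (WithLp.toLp 2 (vecCons 0 u))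
    _ = ‖M‖ := by rw [hcons_norm, mul_one, l2_opNorm_conjTranspose]
  refine hle.lt_of_ne fun heq => ?_
  have heigen := mul_conjTranspose_mulVec_of_norm_eq M (u := vecCons 0 u)
    (by rw [hcons_apply, hMu, hcons_norm, heq, mul_one])
  have hzero := hM.eq_zero_of_mulVec_eq_smul heigen rfl
  simp [hzero] at hcons_norm

end SpectralNorm

section LastRows

/-- The matrix of the last `l` rows of `C`, obtained by deleting the first `k`. The row counts are
tied by an equation rather than by `l = N - k`, which spares casts between `Fin (N - k)` and
`Fin (N - (k + 1) + 1)`. -/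
def lastRows {R ι : Type*} {N k l : ℕ} (h : k + l = N) (C : Matrix (Fin N) ι R) :
    Matrix (Fin l) ι R :=
  C.submatrix (Fin.cast h ∘ Fin.natAdd k) id

lemma lastRows_submatrix_succ {R ι : Type*} {N k l : ℕ} (h : k + (l + 1) = N)
    (C : Matrix (Fin N) ι R) :
    (lastRows h C).submatrix Fin.succ id = lastRows (k := k + 1) (by omega) C := by
  ext i j
  exact congrArg (C · j) (Fin.ext (by simp; omega))

lemma IsUnreducedHessenberg.lastRows_mul_transpose {R ι : Type*} [Fintype ι]
    [NonUnitalNonAssocSemiring R] {N k l : ℕ} (h : k + l = N) {C : Matrix (Fin N) ι R}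
    (hC : IsUnreducedHessenberg (C * Cᵀ)) :
    IsUnreducedHessenberg (lastRows h C * (lastRows h C)ᵀ) :=
  hC.submatrix_of_val_eq_add (k := k) fun _ => rfl

lemma one_sub_colSub_mul_transpose_mul {ι : Type*} {m N k l : ℕ} (h : k + l = N)
    {P : Matrix (Fin m) (Fin N) ℝ} (hP : Pᵀ * P = 1) (C : Matrix (Fin N) ι ℝ) :
    (1 - colSub P k (by omega) * (colSub P k (by omega))ᵀ) * (P * C) =
      (lastRows h Pᵀ)ᵀ * lastRows h C := by
  subst h
  set P₁ := colSub P k (by omega)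
  set P₂ := (lastRows rfl Pᵀ)ᵀ
  have hsplit : P * C = P₁ * C.submatrix (Fin.castAdd l) id + P₂ * lastRows rfl C := by
    ext i j
    exact Fin.sum_univ_add _
  have h₁₁ : P₁ᵀ * P₁ = 1 := by
    change (Pᵀ * P).submatrix (Fin.castAdd l) (Fin.castAdd l) = 1
    rw [hP, submatrix_one _ (Fin.castAdd_injective k l)]
  have h₁₂ : P₁ᵀ * P₂ = 0 := by
    change (Pᵀ * P).submatrix (Fin.castAdd l) (Fin.natAdd k) = 0
    ext i j
    rw [hP, submatrix_apply, one_apply_ne (by simp [Fin.ext_iff]; omega), Matrix.zero_apply]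
  rw [hsplit, Matrix.sub_mul, Matrix.one_mul, Matrix.mul_assoc, Matrix.mul_add,
    ← Matrix.mul_assoc P₁ᵀ, ← Matrix.mul_assoc P₁ᵀ, h₁₁, h₁₂, Matrix.one_mul, Matrix.zero_mul,
    add_zero, add_sub_cancel_left]

lemma specNorm_one_sub_colSub_mul_transpose_mul {m N p k l : ℕ} (h : k + l = N)
    {P : Matrix (Fin m) (Fin N) ℝ} (hP : Pᵀ * P = 1) (C : Matrix (Fin N) (Fin p) ℝ) :
    specNorm ((1 - colSub P k (by omega) * (colSub P k (by omega))ᵀ) * (P * C)) =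
      specNorm (lastRows h C) := by
  have hlast : (lastRows h Pᵀ)ᵀᴴ * (lastRows h Pᵀ)ᵀ = 1 := by
    rw [conjTranspose_eq_transpose_of_trivial]
    change (Pᵀ * P).submatrix (Fin.cast h ∘ Fin.natAdd k) (Fin.cast h ∘ Fin.natAdd k) = 1
    rw [hP, submatrix_one _ ((Fin.cast_injective h).comp (Fin.natAdd_injective l k))]
  rw [one_sub_colSub_mul_transpose_mul h hP, specNorm_eq_l2_opNorm, specNorm_eq_l2_opNorm]
  exact l2_opNorm_mul_of_conjTranspose_mul_self_eq_one hlast _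

end LastRows

theorem cgme_rank_k_error_strict_decreasing_general {m N p k : ℕ} (hk : k + 1 < N)
    {A : Matrix (Fin m) (Fin p) ℝ} {P : Matrix (Fin m) (Fin N) ℝ} (hP : Pᵀ * P = 1)
    {C : Matrix (Fin N) (Fin p) ℝ} (hC : IsUnreducedHessenberg (C * Cᵀ)) (hA : A = P * C) :
    specNorm ((1 - colSub P (k + 1) (by omega) * (colSub P (k + 1) (by omega))ᵀ) * A) <
      specNorm ((1 - colSub P k (by omega) * (colSub P k (by omega))ᵀ) * A) := by
  obtain ⟨l, hl⟩ : ∃ l, k + (l + 2) = N := ⟨N - k - 2, by omega⟩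
  rw [hA, specNorm_one_sub_colSub_mul_transpose_mul (by omega : k + 1 + (l + 1) = N) hP,
    specNorm_one_sub_colSub_mul_transpose_mul hl hP, ← lastRows_submatrix_succ hl,
    specNorm_eq_l2_opNorm, specNorm_eq_l2_opNorm]
  refine IsUnreducedHessenberg.norm_submatrix_succ_lt ?_
  rw [conjTranspose_eq_transpose_of_trivial]
  exact hC.lastRows_mul_transpose hl

/-- `γ_{k+1}^{cgme} < γ_k^{cgme}` for `1 ≤ k ≤ n-1`. -/
theorem cgme_rank_k_error_strict_decreasing
    (m n : ℕ) (hn : 2 ≤ n) (hmn : n < m)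
    (A : Matrix (Fin m) (Fin n) ℝ)
    (P : Matrix (Fin m) (Fin (n + 1)) ℝ) (hP : Pᵀ * P = 1)
    (Q : Matrix (Fin n) (Fin n) ℝ) (hQ : Qᵀ * Q = 1)
    (α : Fin n → ℝ) (hα : ∀ i, 0 < α i)
    (β : Fin n → ℝ) (hβ : ∀ i, 0 < β i)
    (B : Matrix (Fin (n + 1)) (Fin n) ℝ)
    (hB : ∀ (i : Fin (n + 1)) (j : Fin n),
      B i j = if (i : ℕ) = (j : ℕ) then α j
        else if (i : ℕ) = (j : ℕ) + 1 then β j else 0)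
    (hA : A = P * B * Qᵀ)
    (σ : Fin n → ℝ) (hσpos : ∀ i, 0 < σ i)
    (hσstrict : ∀ i j : Fin n, i < j → σ j < σ i)
    (hσ : ∀ i : Fin n, σ i = singVal A ((i : ℕ) + 1))
    (k : ℕ) (hk1 : 1 ≤ k) (hk2 : k ≤ n - 1) :
    specNorm ((1 - colSub P (k + 1) (by omega) * (colSub P (k + 1) (by omega))ᵀ) * A) <
      specNorm ((1 - colSub P k (by omega) * (colSub P k (by omega))ᵀ) * A) := by
  refine cgme_rank_k_error_strict_decreasing_general (C := B * Qᵀ) (by omega) hP ?_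
    (hA.trans (Matrix.mul_assoc P B Qᵀ))
  rw [mul_transpose_mul_transpose_of_transpose_mul_self_eq_one hQ]
  exact isUnreducedHessenberg_mul_transpose_of_bidiagonal (fun i => (hα i).ne')
    (fun i => (hβ i).ne') hB
end

section
/- Let k ≥ 1 and let B_k ∈ ℝ^{(k+1)×k} be lower bidiagonal with (B_k)_{ii} = α_i > 0 (1 ≤ i ≤ k), (B_k)_{i+1,i} = β_{i+1} > 0 (1 ≤ i ≤ k), and all other entries zero, and let B̄_k ∈ ℝ^{k×k} be the matrix of the first k rows of B_k. Then the singular values θ_1 ≥ θ_2 ≥ ⋯ ≥ θ_k of B_k and θ̄_1 ≥ ⋯ ≥ θ̄_k of B̄_k are all simple and strictly interlace: θ_1 > θ̄_1 > θ_2 > θ̄_2 > ⋯ > θ_k > θ̄_k. -/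
open Matrix

/-
A right singular vector of a bidiagonal matrix whose last coordinate vanishes is zero, by the
three-term recurrence for `BᵀB`. Deleting the last row subtracts from `‖Bx‖²` the square of a
nonzero multiple of the last coordinate of `x`, so the Courant–Fischer comparison of `B` with the
truncated matrix yields the weak interlacing inequalities, and equality in one of them would
produce a nonzero right singular vector of `B` that has last coordinate zero.
-/

open Module

section Dimension

variable {K V : Type*} [DivisionRing K] [AddCommGroup V] [Module K V]

lemma exists_mem_ne_zero_of_finrank_pos {P : Submodule K V} (hP : 0 < finrank K P) :
    ∃ x ∈ P, x ≠ 0 := by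
  have hne : P ≠ ⊥ := fun h => hP.ne' (h ▸ finrank_bot K V)
  exact P.exists_mem_ne_zero_of_ne_bot hne

variable [FiniteDimensional K V]

lemma finrank_add_finrank_le_add_finrank_inf (P Q : Submodule K V) :
    finrank K P + finrank K Q ≤ finrank K V + finrank K (P ⊓ Q : Submodule K V) := by
  rw [← Submodule.finrank_sup_add_finrank_inf_eq P Q]
  gcongr
  exact Submodule.finrank_le _

lemma finrank_le_finrank_ker_add_one (φ : V →ₗ[K] K) :
    finrank K V ≤ finrank K φ.ker + 1 := by
  have hrange : finrank K φ.range ≤ 1 := (Submodule.finrank_le _).trans_eq (finrank_self K)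
  have := φ.finrank_range_add_finrank_ker
  omega

end Dimension

section SingularSpaces

variable {𝕜 E F : Type*} [RCLike 𝕜]
  [NormedAddCommGroup E] [InnerProductSpace 𝕜 E] [FiniteDimensional 𝕜 E]
  [NormedAddCommGroup F] [InnerProductSpace 𝕜 F] [FiniteDimensional 𝕜 F]
  (T : E →ₗ[𝕜] F)

/-- An orthonormal basis of right singular vectors of `T`: the vector with index `i` belongs to the
singular value `T.singularValues i`. -/
noncomputable def rightSingularBasis : OrthonormalBasis (Fin (finrank 𝕜 E)) 𝕜 E :=
  T.isSymmetric_adjoint_comp_self.eigenvectorBasis rfl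

/-- The span of the right singular vectors of `T` for its `i` largest singular values, on which `T`
stretches the most. Its orthogonal complement is spanned by the remaining singular vectors. -/
noncomputable def leadingSingularSpace (i : ℕ) : Submodule 𝕜 E :=
  Submodule.span 𝕜 (Set.range fun l : {l : Fin (finrank 𝕜 E) // (l : ℕ) < i} =>
    rightSingularBasis T l)

lemma rightSingularBasis_repr_adjoint_apply_apply (x : E) (l : Fin (finrank 𝕜 E)) :
    (rightSingularBasis T).repr (T.adjoint (T x)) l =
      ((T.singularValues l ^ 2 : ℝ) : 𝕜) * (rightSingularBasis T).repr x l := by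
  rw [T.sq_singularValues_fin rfl]
  exact T.isSymmetric_adjoint_comp_self.eigenvectorBasis_apply_self_apply rfl x l

lemma norm_sq_apply_sub_mul_norm_sq (c : ℝ) (x : E) :
    ‖T x‖ ^ 2 - c * ‖x‖ ^ 2 =
      ∑ l : Fin (finrank 𝕜 E),
        (T.singularValues l ^ 2 - c) * ‖(rightSingularBasis T).repr x l‖ ^ 2 := by
  set v := rightSingularBasis T
  have hx : ‖x‖ ^ 2 = ∑ l, ‖v.repr x l‖ ^ 2 := by
    rw [← v.repr.norm_map x, EuclideanSpace.norm_sq_eq]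
  have hTx : ‖T x‖ ^ 2 =
      ∑ l : Fin (finrank 𝕜 E), T.singularValues l ^ 2 * ‖v.repr x l‖ ^ 2 := by
    rw [← inner_self_eq_norm_sq (𝕜 := 𝕜), ← LinearMap.adjoint_inner_right,
      ← v.repr.inner_map_map, PiLp.inner_apply, map_sum]
    refine Finset.sum_congr rfl fun l _ => ?_
    rw [rightSingularBasis_repr_adjoint_apply_apply, ← smul_eq_mul, inner_smul_right,
      RCLike.re_ofReal_mul, inner_self_eq_norm_sq]
  rw [hx, hTx, Finset.mul_sum, ← Finset.sum_sub_distrib]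
  simp only [sub_mul]

lemma adjoint_apply_apply_eq_smul_of_forall_gap_mul_repr_eq_zero {c : ℝ} {x : E}
    (h : ∀ l : Fin (finrank 𝕜 E),
      (T.singularValues l ^ 2 - c) * ‖(rightSingularBasis T).repr x l‖ ^ 2 = 0) :
    T.adjoint (T x) = (c : 𝕜) • x := by
  refine (rightSingularBasis T).repr.injective (PiLp.ext fun l => ?_)
  rw [rightSingularBasis_repr_adjoint_apply_apply, map_smul, PiLp.smul_apply, smul_eq_mul]
  rcases mul_eq_zero.mp (h l) with hc | hl
  · rw [sub_eq_zero.mp hc]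
  · rw [norm_eq_zero.mp (sq_eq_zero_iff.mp hl), mul_zero, mul_zero]

lemma finrank_leadingSingularSpace (i : ℕ) :
    finrank 𝕜 (leadingSingularSpace T i) = min (finrank 𝕜 E) i := by
  have hli : LinearIndependent 𝕜 fun l : {l : Fin (finrank 𝕜 E) // (l : ℕ) < i} =>
      rightSingularBasis T l :=
    (rightSingularBasis T).orthonormal.linearIndependent.comp _ Subtype.val_injective
  rw [leadingSingularSpace, finrank_span_eq_card hli, Fintype.card_subtype,
    Fin.card_filter_val_lt]

lemma finrank_leadingSingularSpace_add_finrank_orthogonal (i : ℕ) :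
    min (finrank 𝕜 E) i + finrank 𝕜 (leadingSingularSpace T i)ᗮ = finrank 𝕜 E := by
  rw [← finrank_leadingSingularSpace T, Submodule.finrank_add_finrank_orthogonal]

lemma repr_eq_zero_of_mem_orthogonal_leadingSingularSpace {i : ℕ} {x : E}
    (hx : x ∈ (leadingSingularSpace T i)ᗮ) {l : Fin (finrank 𝕜 E)} (hl : (l : ℕ) < i) :
    (rightSingularBasis T).repr x l = 0 := by
  rw [OrthonormalBasis.repr_apply_apply]
  exact hx _ (Submodule.subset_span ⟨⟨l, hl⟩, rfl⟩)

lemma repr_eq_zero_of_mem_leadingSingularSpace {i : ℕ} {x : E}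
    (hx : x ∈ leadingSingularSpace T i) {l : Fin (finrank 𝕜 E)} (hl : i ≤ l) :
    (rightSingularBasis T).repr x l = 0 := by
  have hle : leadingSingularSpace T i ≤ (𝕜 ∙ rightSingularBasis T l)ᗮ := by
    refine Submodule.span_le.mpr ?_
    rintro _ ⟨⟨m, hm⟩, rfl⟩
    have hlm : l ≠ m := fun h => (h ▸ hm).not_ge hl
    exact Submodule.mem_orthogonal_singleton_iff_inner_right.mpr
      ((rightSingularBasis T).orthonormal.inner_eq_zero hlm)
  rw [OrthonormalBasis.repr_apply_apply]
  exact Submodule.mem_orthogonal_singleton_iff_inner_right.mp (hle hx)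

lemma singularValues_gap_mul_repr_nonneg {i : ℕ} {x : E}
    (hx : x ∈ leadingSingularSpace T (i + 1)) (l : Fin (finrank 𝕜 E)) :
    0 ≤ (T.singularValues l ^ 2 - T.singularValues i ^ 2) *
      ‖(rightSingularBasis T).repr x l‖ ^ 2 := by
  rcases Nat.lt_or_ge i l with hl | hl
  · simp [repr_eq_zero_of_mem_leadingSingularSpace T hx hl]
  · have := pow_le_pow_left₀ (T.singularValues_nonneg i) (T.singularValues_antitone hl) 2
    exact mul_nonneg (sub_nonneg.mpr this) (sq_nonneg _)

lemma singularValues_gap_mul_repr_nonpos {i : ℕ} {x : E}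
    (hx : x ∈ (leadingSingularSpace T i)ᗮ) (l : Fin (finrank 𝕜 E)) :
    (T.singularValues l ^ 2 - T.singularValues i ^ 2) *
      ‖(rightSingularBasis T).repr x l‖ ^ 2 ≤ 0 := by
  rcases Nat.lt_or_ge l i with hl | hl
  · simp [repr_eq_zero_of_mem_orthogonal_leadingSingularSpace T hx hl]
  · have := pow_le_pow_left₀ (T.singularValues_nonneg l) (T.singularValues_antitone hl) 2
    exact mul_nonpos_of_nonpos_of_nonneg (sub_nonpos.mpr this) (sq_nonneg _)

lemma singularValues_sq_mul_norm_sq_le_norm_sq_apply {i : ℕ} {x : E}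
    (hx : x ∈ leadingSingularSpace T (i + 1)) :
    T.singularValues i ^ 2 * ‖x‖ ^ 2 ≤ ‖T x‖ ^ 2 := by
  rw [← sub_nonneg, norm_sq_apply_sub_mul_norm_sq]
  exact Finset.sum_nonneg fun l _ => singularValues_gap_mul_repr_nonneg T hx l

lemma norm_sq_apply_le_singularValues_sq_mul_norm_sq {i : ℕ} {x : E}
    (hx : x ∈ (leadingSingularSpace T i)ᗮ) :
    ‖T x‖ ^ 2 ≤ T.singularValues i ^ 2 * ‖x‖ ^ 2 := by
  rw [← sub_nonpos, norm_sq_apply_sub_mul_norm_sq]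
  exact Finset.sum_nonpos fun l _ => singularValues_gap_mul_repr_nonpos T hx l

lemma adjoint_apply_apply_eq_smul_of_mem_leadingSingularSpace {i : ℕ} {x : E}
    (hx : x ∈ leadingSingularSpace T (i + 1))
    (h : ‖T x‖ ^ 2 = T.singularValues i ^ 2 * ‖x‖ ^ 2) :
    T.adjoint (T x) = ((T.singularValues i ^ 2 : ℝ) : 𝕜) • x := by
  refine adjoint_apply_apply_eq_smul_of_forall_gap_mul_repr_eq_zero T fun l => ?_
  rw [← sub_eq_zero, norm_sq_apply_sub_mul_norm_sq,
    Finset.sum_eq_zero_iff_of_nonneg fun l _ => singularValues_gap_mul_repr_nonneg T hx l] at h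
  exact h l (Finset.mem_univ l)

lemma adjoint_apply_apply_eq_smul_of_mem_orthogonal_leadingSingularSpace {i : ℕ} {x : E}
    (hx : x ∈ (leadingSingularSpace T i)ᗮ)
    (h : ‖T x‖ ^ 2 = T.singularValues i ^ 2 * ‖x‖ ^ 2) :
    T.adjoint (T x) = ((T.singularValues i ^ 2 : ℝ) : 𝕜) • x := by
  refine adjoint_apply_apply_eq_smul_of_forall_gap_mul_repr_eq_zero T fun l => ?_
  rw [← sub_eq_zero, norm_sq_apply_sub_mul_norm_sq,
    Finset.sum_eq_zero_iff_of_nonpos fun l _ => singularValues_gap_mul_repr_nonpos T hx l] at h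
  exact h l (Finset.mem_univ l)

end SingularSpaces

section EckartYoung

variable {𝕜 E F : Type*} [RCLike 𝕜]
  [NormedAddCommGroup E] [InnerProductSpace 𝕜 E] [FiniteDimensional 𝕜 E]
  [NormedAddCommGroup F] [InnerProductSpace 𝕜 F] [FiniteDimensional 𝕜 F]
  (T : E →ₗ[𝕜] F)

lemma singularValues_le_opNorm_sub {i : ℕ} (D : E →ₗ[𝕜] F) (hD : finrank 𝕜 D.range ≤ i) :
    T.singularValues i ≤ ‖(T - D).toContinuousLinearMap‖ := by
  rcases Nat.lt_or_ge i (finrank 𝕜 E) with hi | hi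
  · have hinf := finrank_add_finrank_le_add_finrank_inf (leadingSingularSpace T (i + 1)) D.ker
    have hker := D.finrank_range_add_finrank_ker
    rw [finrank_leadingSingularSpace] at hinf
    obtain ⟨x, ⟨hxT, hxD⟩, hx⟩ := exists_mem_ne_zero_of_finrank_pos
      (P := leadingSingularSpace T (i + 1) ⊓ D.ker) (by omega)
    have hle : T.singularValues i * ‖x‖ ≤ ‖T x‖ := by
      refine le_of_sq_le_sq ?_ (norm_nonneg _)
      rw [mul_pow]
      exact singularValues_sq_mul_norm_sq_le_norm_sq_apply T hxT
    have hTD : (T - D).toContinuousLinearMap x = T x := by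
      simp [LinearMap.mem_ker.mp hxD]
    refine le_of_mul_le_mul_right (hle.trans ?_) (norm_pos_iff.mpr hx)
    exact hTD ▸ ContinuousLinearMap.le_opNorm _ x
  · rw [T.singularValues_of_finrank_le hi]
    exact norm_nonneg _

lemma exists_finrank_range_le_and_opNorm_sub_le_singularValues (i : ℕ) :
    ∃ D : E →ₗ[𝕜] F, finrank 𝕜 D.range ≤ i ∧
      ‖(T - D).toContinuousLinearMap‖ ≤ T.singularValues i := by
  set U := leadingSingularSpace T i
  have hrank : finrank 𝕜 (T ∘ₗ U.starProjection.toLinearMap).range ≤ i := by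
    rw [LinearMap.range_comp, Submodule.range_starProjection]
    exact (Submodule.finrank_map_le T U).trans
      ((finrank_leadingSingularSpace T i).trans_le (min_le_right _ _))
  refine ⟨T ∘ₗ U.starProjection.toLinearMap, hrank,
    ContinuousLinearMap.opNorm_le_bound _ (T.singularValues_nonneg i) fun x => ?_⟩
  have hsub : (T - T ∘ₗ U.starProjection.toLinearMap).toContinuousLinearMap x =
      T (Uᗮ.starProjection x) := by
    simp [Submodule.starProjection_orthogonal']
  have hle : ‖T (Uᗮ.starProjection x)‖ ≤ T.singularValues i * ‖Uᗮ.starProjection x‖ := by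
    refine le_of_sq_le_sq ?_ (mul_nonneg (T.singularValues_nonneg i) (norm_nonneg _))
    rw [mul_pow]
    exact norm_sq_apply_le_singularValues_sq_mul_norm_sq T (Submodule.starProjection_apply_mem _ x)
  rw [hsub]
  refine hle.trans ?_
  gcongr
  · exact T.singularValues_nonneg i
  · exact Submodule.norm_starProjection_apply_le _ x

lemma rank_eq_finrank_range_toEuclideanLin {m n : Type*} [Finite m] [Fintype n] [DecidableEq n]
    (A : Matrix m n 𝕜) : A.rank = finrank 𝕜 A.toEuclideanLin.range := by
  classical
  have := Fintype.ofFinite m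
  rw [toEuclideanLin_eq_toLin_orthonormal]
  exact A.rank_eq_finrank_range_toLin _ _

theorem singVal_succ_eq_singularValues {a b : ℕ} (M : Matrix (Fin a) (Fin b) ℝ) (i : ℕ) :
    singVal M (i + 1) = M.toEuclideanLin.singularValues i := by
  have hlower (D : Matrix (Fin a) (Fin b) ℝ) (hD : D.rank < i + 1) :
      M.toEuclideanLin.singularValues i ≤ specNorm (M - D) := by
    rw [Nat.lt_succ_iff, rank_eq_finrank_range_toEuclideanLin] at hD
    rw [specNorm, map_sub]
    exact singularValues_le_opNorm_sub _ _ hD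
  obtain ⟨D, hrank, hnorm⟩ :
      ∃ D : Matrix (Fin a) (Fin b) ℝ,
        D.rank < i + 1 ∧ specNorm (M - D) ≤ M.toEuclideanLin.singularValues i := by
    obtain ⟨D, hrank, hnorm⟩ :=
      exists_finrank_range_le_and_opNorm_sub_le_singularValues M.toEuclideanLin i
    obtain ⟨D, rfl⟩ := toEuclideanLin.surjective D
    rw [← rank_eq_finrank_range_toEuclideanLin] at hrank
    rw [← map_sub] at hnorm
    exact ⟨D, Nat.lt_succ_of_le hrank, hnorm⟩
  have hleast : IsLeast {r : ℝ | ∃ D : Matrix (Fin a) (Fin b) ℝ,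
      D.rank < i + 1 ∧ r = specNorm (M - D)} (M.toEuclideanLin.singularValues i) :=
    ⟨⟨D, hrank, (hlower D hrank).antisymm hnorm⟩, fun _ ⟨D', hD', hr⟩ => hr ▸ hlower D' hD'⟩
  exact hleast.csInf_eq

end EckartYoung

section StrictInterlacing

variable {𝕜 E F G : Type*} [RCLike 𝕜]
  [NormedAddCommGroup E] [InnerProductSpace 𝕜 E] [FiniteDimensional 𝕜 E]
  [NormedAddCommGroup F] [InnerProductSpace 𝕜 F] [FiniteDimensional 𝕜 F]
  [NormedAddCommGroup G] [InnerProductSpace 𝕜 G] [FiniteDimensional 𝕜 G]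
  {S : E →ₗ[𝕜] F} {T : E →ₗ[𝕜] G} {φ : E →ₗ[𝕜] 𝕜}

theorem singularValues_lt_of_norm_sq_eq_add
    (hT : ∀ x, ‖T x‖ ^ 2 = ‖S x‖ ^ 2 + ‖φ x‖ ^ 2)
    (hφ : ∀ (c : 𝕜) (x : E), T.adjoint (T x) = c • x → φ x = 0 → x = 0)
    {i : ℕ} (hi : i < finrank 𝕜 E) : S.singularValues i < T.singularValues i := by
  by_contra! hle
  have hinf := finrank_add_finrank_le_add_finrank_inf
    (leadingSingularSpace S (i + 1)) (leadingSingularSpace T i)ᗮ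
  have horth := finrank_leadingSingularSpace_add_finrank_orthogonal T i
  rw [finrank_leadingSingularSpace] at hinf
  obtain ⟨x, ⟨hxS, hxT⟩, hx⟩ := exists_mem_ne_zero_of_finrank_pos
    (P := leadingSingularSpace S (i + 1) ⊓ (leadingSingularSpace T i)ᗮ) (by omega)
  have hS_ge := singularValues_sq_mul_norm_sq_le_norm_sq_apply S hxS
  have hT_le := norm_sq_apply_le_singularValues_sq_mul_norm_sq T hxT
  have hσ : T.singularValues i ^ 2 * ‖x‖ ^ 2 ≤ S.singularValues i ^ 2 * ‖x‖ ^ 2 := by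
    gcongr
    exact T.singularValues_nonneg i
  have hφx : φ x = 0 := by
    have : ‖φ x‖ ^ 2 = 0 := le_antisymm (by linarith [hT x]) (sq_nonneg _)
    simpa using this
  have heq : ‖T x‖ ^ 2 = T.singularValues i ^ 2 * ‖x‖ ^ 2 :=
    le_antisymm hT_le (by linarith [hT x, sq_nonneg ‖φ x‖])
  exact hx (hφ _ x
    (adjoint_apply_apply_eq_smul_of_mem_orthogonal_leadingSingularSpace T hxT heq) hφx)

theorem singularValues_succ_lt_of_norm_sq_eq_add
    (hT : ∀ x, ‖T x‖ ^ 2 = ‖S x‖ ^ 2 + ‖φ x‖ ^ 2)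
    (hφ : ∀ (c : 𝕜) (x : E), T.adjoint (T x) = c • x → φ x = 0 → x = 0)
    {i : ℕ} (hi : i + 1 < finrank 𝕜 E) : T.singularValues (i + 1) < S.singularValues i := by
  by_contra! hle
  have hinf := finrank_add_finrank_le_add_finrank_inf
    (leadingSingularSpace T (i + 2)) (leadingSingularSpace S i)ᗮ
  have hinfφ := finrank_add_finrank_le_add_finrank_inf
    (leadingSingularSpace T (i + 2) ⊓ (leadingSingularSpace S i)ᗮ) φ.ker
  have horth := finrank_leadingSingularSpace_add_finrank_orthogonal S i
  have hker := finrank_le_finrank_ker_add_one φ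
  rw [finrank_leadingSingularSpace] at hinf
  obtain ⟨x, ⟨⟨hxT, hxS⟩, hxφ⟩, hx⟩ := exists_mem_ne_zero_of_finrank_pos
    (P := leadingSingularSpace T (i + 2) ⊓ (leadingSingularSpace S i)ᗮ ⊓ φ.ker) (by omega)
  have hφx : φ x = 0 := hxφ
  have hS_le := norm_sq_apply_le_singularValues_sq_mul_norm_sq S hxS
  have hσ : S.singularValues i ^ 2 * ‖x‖ ^ 2 ≤ T.singularValues (i + 1) ^ 2 * ‖x‖ ^ 2 := by
    gcongr
    exact S.singularValues_nonneg i
  have hTS : ‖T x‖ ^ 2 = ‖S x‖ ^ 2 := by simp [hT x, hφx]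
  have heq : ‖T x‖ ^ 2 = T.singularValues (i + 1) ^ 2 * ‖x‖ ^ 2 :=
    le_antisymm (by linarith) (singularValues_sq_mul_norm_sq_le_norm_sq_apply T hxT)
  exact hx (hφ _ x (adjoint_apply_apply_eq_smul_of_mem_leadingSingularSpace T hxT heq) hφx)

end StrictInterlacing

section LowerBidiagonal

variable {R : Type*} [Semiring R]

/-- The `(k + 1) × k` lower bidiagonal matrix with diagonal `α` and subdiagonal `β`. The entries of
`β` are indexed by column, so `β j` is the paper's `β_{j+1}`. -/
def lowerBidiagonal {k : ℕ} (α β : Fin k → R) : Matrix (Fin (k + 1)) (Fin k) R :=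
  of fun i j => (if i = j.castSucc then α j else 0) + if i = j.succ then β j else 0

lemma lowerBidiagonal_transpose_mulVec {k : ℕ} (α β : Fin k → R) (y : Fin (k + 1) → R)
    (j : Fin k) :
    ((lowerBidiagonal α β)ᵀ *ᵥ y) j = α j * y j.castSucc + β j * y j.succ := by
  simp [lowerBidiagonal, mulVec, dotProduct, add_mul, Finset.sum_add_distrib]

lemma lowerBidiagonal_mulVec_last {m : ℕ} (α β : Fin (m + 1) → R) (x : Fin (m + 1) → R) :
    (lowerBidiagonal α β *ᵥ x) (Fin.last (m + 1)) = β (Fin.last m) * x (Fin.last m) := by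
  have hdiag (l : Fin (m + 1)) : Fin.last (m + 1) ≠ l.castSucc := l.castSucc_ne_last.symm
  have hsub (l : Fin (m + 1)) : Fin.last (m + 1) = l.succ ↔ Fin.last m = l := by
    rw [← Fin.succ_last, Fin.succ_inj]
  simp [lowerBidiagonal, mulVec, dotProduct, hdiag, hsub]

lemma lowerBidiagonal_mulVec_succ_castSucc {m : ℕ} (α β : Fin (m + 1) → R) (x : Fin (m + 1) → R)
    (j : Fin m) :
    (lowerBidiagonal α β *ᵥ x) j.succ.castSucc =
      α j.succ * x j.succ + β j.castSucc * x j.castSucc := by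
  have hsub (l : Fin (m + 1)) : j.succ.castSucc = l.succ ↔ j.castSucc = l := by
    rw [← Fin.succ_castSucc, Fin.succ_inj]
  simp [lowerBidiagonal, mulVec, dotProduct, add_mul, Finset.sum_add_distrib, hsub,
    -Fin.castSucc_succ]

theorem eq_zero_of_lowerBidiagonal_mulVec_last_eq_zero [NoZeroDivisors R] {m : ℕ}
    {α β : Fin (m + 1) → R} (hα : ∀ j : Fin m, α j.succ ≠ 0) (hβ : ∀ j, β j ≠ 0)
    {c : R} {x : Fin (m + 1) → R}
    (hx : (lowerBidiagonal α β)ᵀ *ᵥ (lowerBidiagonal α β *ᵥ x) = c • x)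
    (hlast : (lowerBidiagonal α β *ᵥ x) (Fin.last (m + 1)) = 0) : x = 0 := by
  set y := lowerBidiagonal α β *ᵥ x with hy
  suffices h : ∀ j, x j = 0 ∧ y j.succ = 0 from funext fun j => (h j).1
  intro j
  induction j using Fin.reverseInduction with
  | last =>
    refine ⟨?_, hlast⟩
    rw [hy, lowerBidiagonal_mulVec_last] at hlast
    exact (mul_eq_zero.mp hlast).resolve_left (hβ _)
  | cast j ih =>
    obtain ⟨hxj, hyj⟩ := ih
    have hy_zero : y j.castSucc.succ = 0 := by
      have hrow := congrFun hx j.succ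
      rw [lowerBidiagonal_transpose_mulVec, Pi.smul_apply, hxj, hyj, mul_zero, add_zero,
        smul_zero] at hrow
      exact (mul_eq_zero.mp hrow).resolve_left (hα j)
    refine ⟨?_, hy_zero⟩
    rw [Fin.succ_castSucc, hy, lowerBidiagonal_mulVec_succ_castSucc, hxj, mul_zero,
      zero_add] at hy_zero
    exact (mul_eq_zero.mp hy_zero).resolve_left (hβ _)

end LowerBidiagonal

section LastRow

variable {𝕜 : Type*} [RCLike 𝕜]

/-- The linear form `x ↦ (M x)ₐ` given by the last row of `M`. -/
noncomputable def lastRowForm {a b : ℕ} (M : Matrix (Fin (a + 1)) (Fin b) 𝕜) :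
    EuclideanSpace 𝕜 (Fin b) →ₗ[𝕜] 𝕜 :=
  EuclideanSpace.projₗ (Fin.last a) ∘ₗ M.toEuclideanLin

lemma norm_sq_toEuclideanLin_eq_add_lastRowForm {a b : ℕ} (M : Matrix (Fin (a + 1)) (Fin b) 𝕜)
    (x : EuclideanSpace 𝕜 (Fin b)) :
    ‖M.toEuclideanLin x‖ ^ 2 =
      ‖(M.submatrix Fin.castSucc id).toEuclideanLin x‖ ^ 2 + ‖lastRowForm M x‖ ^ 2 := by
  rw [EuclideanSpace.norm_sq_eq, EuclideanSpace.norm_sq_eq, Fin.sum_univ_castSucc]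
  rfl

lemma conjTranspose_mulVec_mulVec_eq_smul {m n : Type*} [Fintype m] [Fintype n] [DecidableEq n]
    {M : Matrix m n 𝕜} {c : 𝕜} {x : EuclideanSpace 𝕜 n}
    (h : M.toEuclideanLin.adjoint (M.toEuclideanLin x) = c • x) :
    Mᴴ *ᵥ (M *ᵥ x.ofLp) = c • x.ofLp := by
  classical
  rw [← toEuclideanLin_conjTranspose_eq_adjoint] at h
  exact congrArg WithLp.ofLp h

end LastRow

theorem singularValues_bidiagonal_first_rows_strictly_interlace_general
    (k : ℕ)
    (α : Fin k → ℝ) (hα : ∀ i : Fin k, 0 < (i : ℕ) → α i ≠ 0)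
    (β : Fin k → ℝ) (hβ : ∀ i, β i ≠ 0)
    (Bk : Matrix (Fin (k + 1)) (Fin k) ℝ)
    (hBk : ∀ (i : Fin (k + 1)) (j : Fin k),
      Bk i j = if (i : ℕ) = (j : ℕ) then α j
        else if (i : ℕ) = (j : ℕ) + 1 then β j else 0) :
    ∀ i : ℕ, 1 ≤ i → i ≤ k →
      (singVal (subUL Bk k k k.le_succ le_rfl) i < singVal Bk i ∧
        (i < k → singVal Bk (i + 1) < singVal (subUL Bk k k k.le_succ le_rfl) i)) := by
  intro i hi hik
  obtain ⟨m, rfl⟩ := Nat.exists_eq_add_of_le' (hi.trans hik)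
  obtain ⟨i, rfl⟩ := Nat.exists_eq_add_of_le' hi
  have hB : Bk = lowerBidiagonal α β := by
    ext r j
    rw [hBk]
    simp only [lowerBidiagonal, of_apply, Fin.ext_iff, Fin.val_castSucc, Fin.val_succ]
    split_ifs <;> first | omega | simp
  have hker (c : ℝ) (x : EuclideanSpace ℝ (Fin (m + 1)))
      (hx : Bk.toEuclideanLin.adjoint (Bk.toEuclideanLin x) = c • x)
      (hlast : lastRowForm Bk x = 0) : x = 0 := by
    subst hB
    exact congrArg (WithLp.toLp 2) (eq_zero_of_lowerBidiagonal_mulVec_last_eq_zero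
      (fun j => hα j.succ j.succ_pos) hβ (conjTranspose_mulVec_mulVec_eq_smul hx) hlast)
  have hnorm := norm_sq_toEuclideanLin_eq_add_lastRowForm Bk
  simp only [singVal_succ_eq_singularValues]
  exact ⟨singularValues_lt_of_norm_sq_eq_add hnorm hker (by simpa using hik),
    fun hlt => singularValues_succ_lt_of_norm_sq_eq_add hnorm hker (by simpa using hlt)⟩

/-- the singular values of a positive lower bidiagonal `(k+1) × k` matrix `B_k`
and of the square matrix `B̄_k` of its first `k` rows are simple and strictly interlace:
`θ_1 > θ̄_1 > θ_2 > θ̄_2 > ⋯ > θ_k > θ̄_k`. -/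
theorem singularValues_bidiagonal_first_rows_strictly_interlace
    (k : ℕ) (hk : 1 ≤ k)
    (α : Fin k → ℝ) (hα : ∀ i, 0 < α i)
    (β : Fin k → ℝ) (hβ : ∀ i, 0 < β i)
    (Bk : Matrix (Fin (k + 1)) (Fin k) ℝ)
    (hBk : ∀ (i : Fin (k + 1)) (j : Fin k),
      Bk i j = if (i : ℕ) = (j : ℕ) then α j
        else if (i : ℕ) = (j : ℕ) + 1 then β j else 0) :
    ∀ i : ℕ, 1 ≤ i → i ≤ k →
      (singVal (subUL Bk k k (by omega) (by omega)) i < singVal Bk i ∧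
        (i < k → singVal Bk (i + 1) < singVal (subUL Bk k k (by omega) (by omega)) i)) :=
  singularValues_bidiagonal_first_rows_strictly_interlace_general k α (fun i _ => (hα i).ne')
    β (fun i => (hβ i).ne') Bk hBk
end
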